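/- Let H ∈ (0,1) and α_i, α_j > 0. Then lim_{t→0⁺} t^{−H} · ∫_0^t e^{α_i u} (∫_{−∞}^0 e^{α_j v} (u−v)^{H−2} dv) du = 1/(H(1−H)). -/

import Mathlib

/-!
The inner integral is homogeneous up to the exponential factor: substituting `v = u - u * y` gives
`∫_{-∞}^0 e^{a v} (u - v)^{H - 2} dv = u ^ (H - 1) * G (u)` with
`G c = ∫_1^∞ e^{a c (1 - y)} y^{H - 2} dy` (`inner_eq`). Since `y ^ (H - 2)` is integrable on
`(1, ∞)` and dominates the integrand, `|G| ≤ 1 / (1 - H)` on `[0, ∞)` and dominated convergence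
gives `G c → 1 / (1 - H)` as `c → 0⁺`. Substituting `u = t * s` in the outer integral turns the
rescaled quantity into `∫_0^1 e^{b t s} s ^ (H - 1) G (t * s) ds` (`outer_eq`), and a second
dominated convergence, with dominating function a multiple of `s ^ (H - 1)`, yields the limit
`(1 - H)⁻¹ * ∫_0^1 s ^ (H - 1) ds = 1 / (H * (1 - H))`.
-/

open MeasureTheory Filter

/-- The profile left over when the power `u ^ (H - 1)` is factored out of the inner integral. -/
noncomputable def innerProfile (H a c : ℝ) : ℝ :=
  ∫ y in Set.Ioi (1 : ℝ), Real.exp (a * (c * (1 - y))) * y ^ (H - 2)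

lemma inner_eq (H a u : ℝ) (hu : 0 < u) :
    ∫ v in Set.Iio (0 : ℝ), Real.exp (a * v) * (u - v) ^ (H - 2)
      = u ^ (H - 1) * innerProfile H a u := by
  have h1 := (Measure.measurePreserving_sub_left (volume : Measure ℝ) u).setIntegral_preimage_emb
    (MeasurableEquiv.subLeft u).measurableEmbedding
    (fun z => Real.exp (a * (u - z)) * z ^ (H - 2)) (Set.Ioi u)
  have hs : (fun x : ℝ => u - x) ⁻¹' Set.Ioi u = Set.Iio 0 := by
    ext x; simp
  rw [hs] at h1
  simp only [sub_sub_cancel] at h1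
  have h2 := integral_comp_mul_left_Ioi'
    (fun z => Real.exp (a * (u - z)) * z ^ (H - 2)) 1 hu
  rw [mul_one] at h2
  rw [h1, ← h2, innerProfile, smul_eq_mul, ← integral_const_mul, ← integral_const_mul]
  refine setIntegral_congr_fun measurableSet_Ioi fun y hy => ?_
  have hy0 : (0 : ℝ) ≤ y := zero_le_one.trans (le_of_lt hy)
  have hp : u * u ^ (H - 2) = u ^ (H - 1) := by
    rw [show H - 1 = 1 + (H - 2) by ring, Real.rpow_add hu, Real.rpow_one]
  simp only [Real.mul_rpow hu.le hy0, ← hp, show u - u * y = u * (1 - y) by ring]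
  ring

lemma integrable_rpow {H : ℝ} (hH : H < 1) :
    Integrable (fun y : ℝ => y ^ (H - 2)) (volume.restrict (Set.Ioi 1)) :=
  integrableOn_Ioi_rpow_of_lt (by linarith) one_pos

lemma integral_rpow_Ioi_one {H : ℝ} (hH : H < 1) :
    ∫ y in Set.Ioi (1 : ℝ), y ^ (H - 2) = 1 / (1 - H) := by
  rw [integral_Ioi_rpow_of_lt (by linarith) one_pos, Real.one_rpow, neg_div, ← div_neg]
  congr 1
  ring

lemma norm_integrand_le (H : ℝ) {a c y : ℝ} (ha : 0 < a) (hc : 0 ≤ c) (hy : y ∈ Set.Ioi (1 : ℝ)) :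
    ‖Real.exp (a * (c * (1 - y))) * y ^ (H - 2)‖ ≤ y ^ (H - 2) := by
  have hy1 : (1 : ℝ) < y := hy
  have hp : 0 ≤ y ^ (H - 2) := Real.rpow_nonneg (by linarith) _
  rw [Real.norm_of_nonneg (by positivity)]
  refine mul_le_of_le_one_left hp (Real.exp_le_one_iff.2 ?_)
  exact mul_nonpos_of_nonneg_of_nonpos ha.le
    (mul_nonpos_of_nonneg_of_nonpos hc (by linarith))

lemma norm_innerProfile_le {H a c : ℝ} (hH : H < 1) (ha : 0 < a) (hc : 0 ≤ c) :
    ‖innerProfile H a c‖ ≤ 1 / (1 - H) := by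
  rw [← integral_rpow_Ioi_one hH]
  refine norm_integral_le_of_norm_le (integrable_rpow hH) ?_
  filter_upwards [ae_restrict_mem measurableSet_Ioi] with y hy
  exact norm_integrand_le H ha hc hy

lemma tendsto_innerProfile {H a : ℝ} (hH : H < 1) (ha : 0 < a) :
    Tendsto (innerProfile H a) (nhdsWithin 0 (Set.Ioi 0)) (nhds (1 / (1 - H))) := by
  rw [← integral_rpow_Ioi_one hH]
  refine tendsto_integral_filter_of_dominated_convergence (fun y => y ^ (H - 2)) ?_ ?_
    (integrable_rpow hH) ?_
  · exact .of_forall fun c => Measurable.aestronglyMeasurable (by fun_prop)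
  · filter_upwards [self_mem_nhdsWithin] with c hc
    filter_upwards [ae_restrict_mem measurableSet_Ioi] with y hy
    exact norm_integrand_le H ha (le_of_lt hc) hy
  · refine .of_forall fun y => ?_
    have : Continuous fun c : ℝ => Real.exp (a * (c * (1 - y))) * y ^ (H - 2) := by fun_prop
    simpa using (this.tendsto 0).mono_left nhdsWithin_le_nhds

lemma stronglyMeasurable_innerProfile (H a : ℝ) : StronglyMeasurable (innerProfile H a) := by
  refine StronglyMeasurable.integral_prod_right
    (f := fun c y : ℝ => Real.exp (a * (c * (1 - y))) * y ^ (H - 2)) ?_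
  refine Measurable.stronglyMeasurable ?_
  simp only [Function.uncurry_def]
  fun_prop

lemma outer_eq (H a b t : ℝ) (ht : 0 < t) :
    t ^ (-H) * ∫ u in (0 : ℝ)..t,
        Real.exp (b * u) * ∫ v in Set.Iio (0 : ℝ), Real.exp (a * v) * (u - v) ^ (H - 2)
      = ∫ s in (0 : ℝ)..1, Real.exp (b * (t * s)) * (s ^ (H - 1) * innerProfile H a (t * s)) := by
  have h := intervalIntegral.mul_integral_comp_mul_left (a := 0) (b := 1) t
    (f := fun u => Real.exp (b * u) *
      ∫ v in Set.Iio (0 : ℝ), Real.exp (a * v) * (u - v) ^ (H - 2))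
  rw [mul_zero, mul_one] at h
  rw [← h, ← intervalIntegral.integral_const_mul, ← intervalIntegral.integral_const_mul]
  refine intervalIntegral.integral_congr_ae (.of_forall fun s hs => ?_)
  rw [Set.uIoc_of_le zero_le_one] at hs
  have hp : t ^ (-H) * (t * t ^ (H - 1)) = 1 := by
    rw [Real.rpow_sub_one ht.ne', mul_div_cancel₀ _ ht.ne', ← Real.rpow_add ht]
    simp
  simp only [inner_eq H a _ (mul_pos ht hs.1), Real.mul_rpow ht.le hs.1.le]
  linear_combination
    Real.exp (b * (t * s)) * (s ^ (H - 1) * innerProfile H a (t * s)) * hp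

theorem stmt15 (H αi αj : ℝ) (hH : H ∈ Set.Ioo (0 : ℝ) 1) (hi : 0 < αi) (hj : 0 < αj) :
    Tendsto
      (fun t : ℝ => t ^ (-H) *
        ∫ u in (0 : ℝ)..t,
          Real.exp (αi * u) * ∫ v in Set.Iio (0 : ℝ), Real.exp (αj * v) * (u - v) ^ (H - 2))
      (nhdsWithin (0 : ℝ) (Set.Ioi 0)) (nhds (1 / (H * (1 - H)))) := by
  obtain ⟨h0, h1⟩ := hH
  have hlim : ∫ s in (0 : ℝ)..1, s ^ (H - 1) * (1 / (1 - H)) = 1 / (H * (1 - H)) := by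
    rw [intervalIntegral.integral_mul_const, integral_rpow (Or.inl (by linarith))]
    simp [h0.ne', mul_comm]
  rw [← hlim]
  refine Tendsto.congr' (f₁ := fun t => ∫ s in (0 : ℝ)..1,
    Real.exp (αi * (t * s)) * (s ^ (H - 1) * innerProfile H αj (t * s))) ?_ ?_
  · filter_upwards [self_mem_nhdsWithin] with t ht
    exact (outer_eq H αj αi t ht).symm
  refine intervalIntegral.tendsto_integral_filter_of_dominated_convergence
    (fun s => Real.exp αi * (s ^ (H - 1) * (1 / (1 - H)))) ?_ ?_ ?_ ?_
  · refine .of_forall fun t => Measurable.aestronglyMeasurable ?_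
    have hm := (stronglyMeasurable_innerProfile H αj).measurable
    fun_prop
  · filter_upwards [Ioo_mem_nhdsGT (one_pos : (0 : ℝ) < 1)] with t ht
    refine .of_forall fun s hs => ?_
    rw [Set.uIoc_of_le zero_le_one] at hs
    have hts : t * s ≤ 1 := mul_le_one₀ ht.2.le hs.1.le hs.2
    rw [norm_mul, norm_mul, Real.norm_of_nonneg (Real.exp_pos _).le,
      Real.norm_of_nonneg (Real.rpow_nonneg hs.1.le _)]
    have hr : 0 ≤ s ^ (H - 1) := Real.rpow_nonneg hs.1.le _
    have hG := norm_innerProfile_le h1 hj (mul_pos ht.1 hs.1).le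
    gcongr
    exact mul_le_of_le_one_right hi.le hts
  · exact ((intervalIntegral.intervalIntegrable_rpow' (by linarith)).mul_const _).const_mul _
  · refine .of_forall fun s hs => ?_
    rw [Set.uIoc_of_le zero_le_one] at hs
    have hc : Tendsto (fun t : ℝ => t * s) (nhdsWithin 0 (Set.Ioi 0))
        (nhdsWithin 0 (Set.Ioi 0)) := by
      refine tendsto_nhdsWithin_iff.2 ⟨?_, ?_⟩
      · simpa using ((continuous_mul_const s).tendsto 0).mono_left nhdsWithin_le_nhds
      · filter_upwards [self_mem_nhdsWithin] with t ht using mul_pos ht hs.1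
    have he : Tendsto (fun t : ℝ => Real.exp (αi * (t * s))) (nhdsWithin 0 (Set.Ioi 0))
        (nhds 1) := by
      have : Continuous fun t : ℝ => Real.exp (αi * (t * s)) := by fun_prop
      simpa using (this.tendsto 0).mono_left nhdsWithin_le_nhds
    simpa using he.mul (((tendsto_innerProfile h1 hj).comp hc).const_mul (s ^ (H - 1)))
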